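/- arXiv:1707.02366 — 3 statements merged into one kernel-verified Lean document; each statement's English description precedes it below -/
import Mathlib

section
/- For every positive integer k, the sequence (t_n) satisfies t_{3k} = t_k/(2t_k + 1) and t_{3k+1} = (2t_k + 1)/(2t_k + 2). -/
/-!
Write `x = t k` and `v = v₃(k + 1)`. As `v₃` vanishes at `3k + 1` and `3k + 2`, two steps of the
recurrence starting from `t (3k) = x / (2x + 1)` give `t (3k + 1) = (2x + 1) / (2x + 2)` and
`t (3k + 2) = x + 1` (`t_block`). Since `v₃(3k + 3) = v + 1`, a third step gives
`t (3k + 3) = 1 / (2 (2 + 2v - x))`, which is `y / (2y + 1)` for `y = t (k + 1) = 1 / (2 (1 + 2v - x))`.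
So the formula for `t (3k)` propagates from `k` to `k + 1`, starting from `k = 0`, where it also holds.

The last step needs `1 + 2v - x` to be nonzero. The proof therefore carries along the bounds
`0 ≤ t n < 1 + 2 v₃(n + 1)`, which follow for `n = 3j + r` from the formulas and the bounds at `j`
(`t_invariant`).
-/

theorem padicValNat_three_mul_add_three (k : ℕ) :
    padicValNat 3 (3 * k + 3) = padicValNat 3 (k + 1) + 1 := by
  have : Fact (Nat.Prime 3) := ⟨Nat.prime_three⟩
  rw [show 3 * k + 3 = 3 * (k + 1) by ring, padicValNat.mul (by norm_num) (by omega),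
    padicValNat.self (by norm_num), add_comm]

theorem t_block
    (t : ℕ → ℚ)
    (ht : ∀ n : ℕ, 1 ≤ n →
      t n = 1 / (2 * (1 + 2 * (padicValNat 3 n : ℚ) - t (n - 1))))
    (k : ℕ) (hx : 0 ≤ t k) (h : t (3 * k) = t k / (2 * t k + 1)) :
    t (3 * k + 1) = (2 * t k + 1) / (2 * t k + 2) ∧ t (3 * k + 2) = t k + 1 := by
  have h1 : t (3 * k + 1) = (2 * t k + 1) / (2 * t k + 2) := by
    rw [ht (3 * k + 1) (by omega), padicValNat.eq_zero_of_not_dvd (by omega),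
      Nat.add_sub_cancel, h]
    have e : 2 * (1 + 2 * ((0 : ℕ) : ℚ) - t k / (2 * t k + 1))
        = (2 * t k + 2) / (2 * t k + 1) := by
      push_cast
      field_simp
      ring
    rw [e, one_div_div]
  refine ⟨h1, ?_⟩
  rw [ht (3 * k + 2) (by omega), padicValNat.eq_zero_of_not_dvd (by omega),
    show 3 * k + 2 - 1 = 3 * k + 1 by omega, h1]
  have e : 2 * (1 + 2 * ((0 : ℕ) : ℚ) - (2 * t k + 1) / (2 * t k + 2)) = 1 / (t k + 1) := by
    push_cast
    field_simp
    ring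
  rw [e, one_div_one_div]

/-- The bounds on `t n` keep every denominator in the recurrence positive, so that no division by
zero occurs. -/
theorem t_invariant
    (t : ℕ → ℚ) (ht0 : t 0 = 0)
    (ht : ∀ n : ℕ, 1 ≤ n →
      t n = 1 / (2 * (1 + 2 * (padicValNat 3 n : ℚ) - t (n - 1)))) (n : ℕ) :
    t (3 * n) = t n / (2 * t n + 1) ∧ 0 ≤ t n ∧ t n < 1 + 2 * (padicValNat 3 (n + 1) : ℚ) := by
  induction n using Nat.strong_induction_on with
  | _ n ih =>
  rcases Nat.eq_zero_or_pos n with rfl | hn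
  · simp [ht0]
  constructor
  · obtain ⟨k, rfl⟩ : ∃ k, n = k + 1 := ⟨n - 1, by omega⟩
    obtain ⟨hf, hx, hlt⟩ := ih k (by omega)
    have h2 := (t_block t ht k hx hf).2
    rw [show 3 * (k + 1) = 3 * k + 3 by ring, ht (3 * k + 3) (by omega),
      padicValNat_three_mul_add_three, show 3 * k + 3 - 1 = 3 * k + 2 by omega, h2,
      ht (k + 1) (by omega), Nat.add_sub_cancel]
    push_cast
    generalize (padicValNat 3 (k + 1) : ℚ) = v at *
    obtain ⟨d, hd⟩ : ∃ d, d = 1 + 2 * v - t k := ⟨_, rfl⟩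
    have hd0 : 0 < d := by linarith
    rw [← hd, show 1 + 2 * (v + 1) - (t k + 1) = d + 1 by rw [hd]; ring]
    field_simp
    ring
  · have hv : (0 : ℚ) ≤ (padicValNat 3 (n + 1) : ℚ) := Nat.cast_nonneg _
    obtain ⟨hf, hx, hlt⟩ := ih (n / 3) (by omega)
    obtain ⟨h1, h2⟩ := t_block t ht (n / 3) hx hf
    obtain ⟨j, hj⟩ : ∃ j, j = n / 3 := ⟨_, rfl⟩
    rw [← hj] at hf hx hlt h1 h2
    obtain hr | hr | hr : n = 3 * j ∨ n = 3 * j + 1 ∨ n = 3 * j + 2 := by omega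
    · rw [← hr] at hf
      have hlt1 : t j / (2 * t j + 1) < 1 := by
        rw [div_lt_one (by linarith)]
        linarith
      rw [hf]
      exact ⟨by positivity, by linarith⟩
    · rw [← hr] at h1
      have hlt1 : (2 * t j + 1) / (2 * t j + 2) < 1 := by
        rw [div_lt_one (by linarith)]
        linarith
      rw [h1]
      exact ⟨by positivity, by linarith⟩
    · rw [hr, h2, show 3 * j + 2 + 1 = 3 * j + 3 by ring, padicValNat_three_mul_add_three]
      push_cast
      exact ⟨by linarith, by linarith⟩

theorem t_middle_right_child_formulas
    (t : ℕ → ℚ) (ht0 : t 0 = 0)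
    (ht : ∀ n : ℕ, 1 ≤ n →
      t n = 1 / (2 * (1 + 2 * (padicValNat 3 n : ℚ) - t (n - 1)))) :
    ∀ k : ℕ, 1 ≤ k →
      t (3 * k) = t k / (2 * t k + 1) ∧
      t (3 * k + 1) = (2 * t k + 1) / (2 * t k + 2) := by
  intro k _
  obtain ⟨hf, hx, _⟩ := t_invariant t ht0 ht k
  exact ⟨hf, (t_block t ht k hx hf).1⟩
end

section
/- For every positive integer n, the integer part (floor) of s_{n−1} equals the 5-adic valuation of n: ⌊s_{n−1}⌋ = v₅(n). -/
/-!
The proof rests on the self-similarity `s (5 * k + 4) = s k + 1`, matching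
`v₅ (5 * (k + 1)) = v₅ (k + 1) + 1`, together with the fact that the other four terms
`s (5 * k + i)`, `i < 4`, of each block of five lie in `[0, 1)`, matching `v₅ (5 * k + i + 1) = 0`.

To pass from one block to the next, put `t = 1 + 2 * v₅ (k + 1) - s k`, so that
`s (k + 1) = 1 / (3 * t)`. Starting from `s (5 * k + 4) = s k + 1`, the recursion produces
`1 / (3 * (1 + t))`, `(1 + t) / (3 * t + 2)`, `(3 * t + 2) / (6 * t + 3)`,
`(2 * t + 1) / (3 * t + 1)` and finally `1 + 1 / (3 * t) = s (k + 1) + 1` (`block_step`).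
The only input needed is `t > 0`, which follows from the floor bound `s k < v₅ (k + 1) + 1`.
So the floor statement and the block structure are proved together by strong induction.
-/

lemma padicValNat_five_mul_succ (k : ℕ) :
    padicValNat 5 (5 * k + 5) = padicValNat 5 (k + 1) + 1 := by
  haveI : Fact (Nat.Prime 5) := ⟨by norm_num⟩
  rw [show 5 * k + 5 = 5 * (k + 1) by ring, padicValNat.mul (by norm_num) (by omega),
    padicValNat_self, add_comm]

lemma padicValNat_five_eq_zero {n : ℕ} (h : n % 5 ≠ 0) : padicValNat 5 n = 0 :=
  padicValNat.eq_zero_of_not_dvd (by omega)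

/-- The explicit computation of the terms of block `k + 1` in terms of
`t = 1 + 2 * v₅ (k + 1) - s k`. -/
lemma block_step (s : ℕ → ℚ)
    (hs : ∀ n : ℕ, 1 ≤ n →
      s n = 1 / (3 * (1 + 2 * (padicValNat 5 n : ℚ) - s (n - 1))))
    (k : ℕ) (hlt : s k < padicValNat 5 (k + 1) + 1) (hk : s (5 * k + 4) = s k + 1) :
    s (5 * (k + 1) + 4) = s (k + 1) + 1 ∧
      ∀ i < 4, 0 ≤ s (5 * (k + 1) + i) ∧ s (5 * (k + 1) + i) < 1 := by
  obtain ⟨t, ht⟩ : ∃ t : ℚ, t = 1 + 2 * (padicValNat 5 (k + 1) : ℚ) - s k := ⟨_, rfl⟩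
  have hv : (0 : ℚ) ≤ padicValNat 5 (k + 1) := Nat.cast_nonneg _
  have tpos : 0 < t := by linarith
  have hnext : s (k + 1) = 1 / (3 * t) := by
    rw [hs (k + 1) (by omega), Nat.add_sub_cancel, ht]
  have rec_zero : ∀ i < 4, s (5 * k + 6 + i) = 1 / (3 * (1 - s (5 * k + 5 + i))) := by
    intro i hi
    rw [hs _ (by omega), padicValNat_five_eq_zero (by omega),
      show 5 * k + 6 + i - 1 = 5 * k + 5 + i by omega]
    simp
  have h0 : s (5 * k + 5) = 1 / (3 * (1 + t)) := by
    rw [hs _ (by omega), padicValNat_five_mul_succ, show 5 * k + 5 - 1 = 5 * k + 4 by omega,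
      hk, ht]
    push_cast
    congr 2
    ring
  have h1 : s (5 * k + 6) = (1 + t) / (3 * t + 2) := by
    have e : 1 - 1 / (3 * (1 + t)) = (3 * t + 2) / (3 * (1 + t)) := by field_simp; ring
    rw [rec_zero 0 (by omega), add_zero, h0, e]
    field_simp
  have h2 : s (5 * k + 7) = (3 * t + 2) / (6 * t + 3) := by
    have e : 1 - (1 + t) / (3 * t + 2) = (2 * t + 1) / (3 * t + 2) := by field_simp; ring
    rw [rec_zero 1 (by omega), h1, e]
    field_simp
    ring
  have h3 : s (5 * k + 8) = (2 * t + 1) / (3 * t + 1) := by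
    have e : 1 - (3 * t + 2) / (6 * t + 3) = (3 * t + 1) / (6 * t + 3) := by field_simp; ring
    rw [rec_zero 2 (by omega), h2, e]
    field_simp
    ring
  have h4 : s (5 * k + 9) = 1 / (3 * t) + 1 := by
    have e : 1 - (2 * t + 1) / (3 * t + 1) = t / (3 * t + 1) := by field_simp; ring
    rw [rec_zero 3 (by omega), h3, e]
    field_simp
    ring
  refine ⟨by rw [hnext, ← h4]; rfl, fun i hi => ?_⟩
  rw [show 5 * (k + 1) + i = 5 * k + 5 + i by ring]
  interval_cases i
  · rw [add_zero, h0]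
    exact ⟨by positivity, by rw [div_lt_one (by positivity)]; linarith⟩
  · rw [h1]
    exact ⟨by positivity, by rw [div_lt_one (by positivity)]; linarith⟩
  · rw [h2]
    exact ⟨by positivity, by rw [div_lt_one (by positivity)]; linarith⟩
  · rw [h3]
    exact ⟨by positivity, by rw [div_lt_one (by positivity)]; linarith⟩

/-- The simultaneous induction: the floor bounds at `k`, the self-similarity, and the bounds on
the first four terms of block `k`. -/
lemma bounds_and_block (s : ℕ → ℚ) (hs0 : s 0 = 0)
    (hs : ∀ n : ℕ, 1 ≤ n →
      s n = 1 / (3 * (1 + 2 * (padicValNat 5 n : ℚ) - s (n - 1)))) (k : ℕ) :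
    ((padicValNat 5 (k + 1) : ℚ) ≤ s k ∧ s k < padicValNat 5 (k + 1) + 1) ∧
      s (5 * k + 4) = s k + 1 ∧ ∀ i < 4, 0 ≤ s (5 * k + i) ∧ s (5 * k + i) < 1 := by
  induction k using Nat.strong_induction_on with
  | _ k ih =>
    rcases k with _ | k
    · have hv : ∀ n, n % 5 ≠ 0 → s n = 1 / (3 * (1 - s (n - 1))) := by
        intro n hn
        rw [hs n (by omega), padicValNat_five_eq_zero hn]
        simp
      have h1 : s 1 = 1 / 3 := by rw [hv 1 (by omega)]; norm_num [hs0]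
      have h2 : s 2 = 1 / 2 := by rw [hv 2 (by omega)]; norm_num [h1]
      have h3 : s 3 = 2 / 3 := by rw [hv 3 (by omega)]; norm_num [h2]
      have h4 : s 4 = 1 := by rw [hv 4 (by omega)]; norm_num [h3]
      refine ⟨by simp [hs0], by simp [hs0, h4], fun i hi => ?_⟩
      interval_cases i <;> norm_num [hs0, h1, h2, h3]
    · obtain ⟨⟨-, hlt⟩, hk, -⟩ := ih k (by omega)
      refine ⟨?_, block_step s hs k hlt hk⟩
      -- The floor bounds at `k + 1` come from the earlier block that contains it.
      obtain ⟨⟨hj1, hj2⟩, hj, hsmall⟩ := ih ((k + 1) / 5) (by omega)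
      by_cases hr : (k + 1) % 5 = 4
      · obtain ⟨j, hj'⟩ : ∃ j, j = (k + 1) / 5 := ⟨_, rfl⟩
        rw [← hj'] at hj1 hj2 hj
        rw [show k + 1 = 5 * j + 4 by omega, hj, padicValNat_five_mul_succ]
        push_cast
        constructor <;> linarith
      · have h := hsmall ((k + 1) % 5) (by omega)
        rw [Nat.div_add_mod] at h
        rw [padicValNat_five_eq_zero (n := k + 1 + 1) (by omega)]
        simpa using h

theorem s_floor_eq_padicValNat
    (s : ℕ → ℚ) (hs0 : s 0 = 0)
    (hs : ∀ n : ℕ, 1 ≤ n →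
      s n = 1 / (3 * (1 + 2 * (padicValNat 5 n : ℚ) - s (n - 1)))) :
    ∀ n : ℕ, 1 ≤ n → ⌊s (n - 1)⌋ = (padicValNat 5 n : ℤ) := by
  intro n hn
  obtain ⟨⟨h1, h2⟩, -⟩ := bounds_and_block s hs0 hs (n - 1)
  rw [Nat.sub_add_cancel hn] at h1 h2
  rw [Int.floor_eq_iff]
  exact ⟨by exact_mod_cast h1, by exact_mod_cast h2⟩
end

section
/- For every positive integer k, the sequence (s_n) satisfies s_{5k} = s_k/(3s_k + 1), s_{5k+1} = (3s_k + 1)/(6s_k + 3), and s_{5k+2} = (1 + 2s_k)/(2 + 3s_k). -/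
/-!
Writing `x = s k`, the recurrence has no valuation term at `5k+1, …, 5k+4`, so once
`s (5k) = x / (3x + 1)` is known, iterating `y ↦ 1 / (3 (1 - y))` gives all of
`s (5k+1), …, s (5k+4)`, ending with `s (5k+4) = 1 + x` (`s_block`). Since
`v₅(5(k+1)) = v₅(k+1) + 1`, the next step yields `s (5(k+1)) = 1 / (3 (2 + 2 v₅(k+1) - x))`, which is
`s (k+1) / (3 s (k+1) + 1)` as long as the denominator in the recurrence for `s (k+1)` is nonzero.
That is guaranteed by the bounds `0 ≤ s n < 1 + 2 v₅(n+1)`, which the block formulas transfer from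
`k` to `5k, …, 5k+4`; the formula and the bounds are therefore proved by one strong
induction (`s_five_mul_and_bounds`).
-/

lemma padicValNat_five_mul_add {r : ℕ} (k : ℕ) (h0 : 0 < r) (h5 : r < 5) :
    padicValNat 5 (5 * k + r) = 0 :=
  padicValNat.eq_zero_of_not_dvd (by omega)

/-- The value at `5k` determines the four following values: no valuation term intervenes. -/
lemma s_block (s : ℕ → ℚ)
    (hs : ∀ n : ℕ, 1 ≤ n →
      s n = 1 / (3 * (1 + 2 * (padicValNat 5 n : ℚ) - s (n - 1))))
    (k : ℕ) (hk : 0 ≤ s k) (h : s (5 * k) = s k / (3 * s k + 1)) :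
    s (5 * k + 1) = (3 * s k + 1) / (6 * s k + 3) ∧
    s (5 * k + 2) = (1 + 2 * s k) / (2 + 3 * s k) ∧
    s (5 * k + 3) = (2 + 3 * s k) / (3 * (1 + s k)) ∧
    s (5 * k + 4) = 1 + s k := by
  have step : ∀ r, r < 4 → s (5 * k + (r + 1)) = 1 / (3 * (1 - s (5 * k + r))) := by
    intro r hr
    rw [hs (5 * k + (r + 1)) (by omega),
      padicValNat_five_mul_add k (by omega : 0 < r + 1) (by omega)]
    simp [← add_assoc]
  generalize s k = x at *
  have h1 : s (5 * k + 1) = (3 * x + 1) / (6 * x + 3) := by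
    have e : 1 - x / (3 * x + 1) = (2 * x + 1) / (3 * x + 1) := by field_simp; ring
    have := step 0 (by norm_num)
    rw [add_zero, h, e] at this
    rw [this]; field_simp; ring
  have h2 : s (5 * k + 2) = (1 + 2 * x) / (2 + 3 * x) := by
    have e : 1 - (3 * x + 1) / (6 * x + 3) = (3 * x + 2) / (6 * x + 3) := by field_simp; ring
    rw [step 1 (by norm_num), h1, e]; field_simp; ring
  have h3 : s (5 * k + 3) = (2 + 3 * x) / (3 * (1 + x)) := by
    have e : 1 - (1 + 2 * x) / (2 + 3 * x) = (1 + x) / (2 + 3 * x) := by field_simp; ring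
    rw [step 2 (by norm_num), h2, e]; field_simp
  have h4 : s (5 * k + 4) = 1 + x := by
    have e : 1 - (2 + 3 * x) / (3 * (1 + x)) = 1 / (3 * (1 + x)) := by field_simp; ring
    rw [step 3 (by norm_num), h3, e]; field_simp
  exact ⟨h1, h2, h3, h4⟩

/-- The upper bound says that the denominator in the recurrence for `s (n + 1)` is positive. -/
lemma s_five_mul_and_bounds (s : ℕ → ℚ) (hs0 : s 0 = 0)
    (hs : ∀ n : ℕ, 1 ≤ n →
      s n = 1 / (3 * (1 + 2 * (padicValNat 5 n : ℚ) - s (n - 1)))) (n : ℕ) :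
    s (5 * n) = s n / (3 * s n + 1) ∧ 0 ≤ s n ∧ s n < 1 + 2 * (padicValNat 5 (n + 1) : ℚ) := by
  induction n using Nat.strong_induction_on with
  | _ n ih =>
  rcases Nat.eq_zero_or_pos n with rfl | hn
  · simp [hs0]
  constructor
  · obtain ⟨m, rfl⟩ : ∃ m, n = m + 1 := ⟨n - 1, by omega⟩
    obtain ⟨hm, h0, hlt⟩ := ih m (by omega)
    obtain ⟨-, -, -, h4⟩ := s_block s hs m h0 hm
    have e5 := hs (5 * m + 5) (by omega)
    have e1 := hs (m + 1) (by omega)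
    rw [show 5 * m + 5 - 1 = 5 * m + 4 by omega, h4, padicValNat_five_mul_succ] at e5
    rw [show m + 1 - 1 = m by omega] at e1
    rw [show 5 * (m + 1) = 5 * m + 5 by ring, e5, e1]
    push_cast
    generalize (padicValNat 5 (m + 1) : ℚ) = v at *
    obtain ⟨d, hd⟩ : ∃ d, d = 1 + 2 * v - s m := ⟨_, rfl⟩
    have hdp : 0 < d := by linarith
    rw [← hd, show 1 + 2 * (v + 1) - (1 + s m) = d + 1 by rw [hd]; ring]
    field_simp
    ring
  -- The bounds at `n = 5q + r` come from the block of `q < n`.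
  · obtain ⟨q, r, hr, rfl⟩ : ∃ q r, r < 5 ∧ n = 5 * q + r :=
      ⟨n / 5, n % 5, by omega, by omega⟩
    obtain ⟨hq, h0, hlt⟩ := ih q (by omega)
    obtain ⟨h1, h2, h3, h4⟩ := s_block s hs q h0 hq
    -- Off the last residue it suffices to bound by `1`, whatever the valuation.
    have weak : ∀ y : ℚ, ∀ m : ℕ, 0 ≤ y → y < 1 → 0 ≤ y ∧ y < 1 + 2 * (padicValNat 5 m : ℚ) := by
      intro y m hy hy1
      have : (0 : ℚ) ≤ padicValNat 5 m := Nat.cast_nonneg _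
      exact ⟨hy, by linarith⟩
    interval_cases r
    · rw [add_zero, hq]
      exact weak _ _ (by positivity) (by rw [div_lt_one (by positivity)]; linarith)
    · rw [h1]
      exact weak _ _ (by positivity) (by rw [div_lt_one (by positivity)]; linarith)
    · rw [h2]
      exact weak _ _ (by positivity) (by rw [div_lt_one (by positivity)]; linarith)
    · rw [h3]
      exact weak _ _ (by positivity) (by rw [div_lt_one (by positivity)]; linarith)
    · rw [h4, show 5 * q + 4 + 1 = 5 * q + 5 by ring, padicValNat_five_mul_succ]
      push_cast
      constructor <;> linarith

theorem s_child_formulas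
    (s : ℕ → ℚ) (hs0 : s 0 = 0)
    (hs : ∀ n : ℕ, 1 ≤ n →
      s n = 1 / (3 * (1 + 2 * (padicValNat 5 n : ℚ) - s (n - 1)))) :
    ∀ k : ℕ, 1 ≤ k →
      s (5 * k) = s k / (3 * s k + 1) ∧
      s (5 * k + 1) = (3 * s k + 1) / (6 * s k + 3) ∧
      s (5 * k + 2) = (1 + 2 * s k) / (2 + 3 * s k) := by
  intro k _
  obtain ⟨h, h0, -⟩ := s_five_mul_and_bounds s hs0 hs k
  obtain ⟨h1, h2, -, -⟩ := s_block s hs k h0 h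
  exact ⟨h, h1, h2⟩
end
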